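/- Let G be a finitely presented group and H a finite index normal subgroup of G. Then rdef(G) − 1 ≤ (rdef(H) − 1)/|G:H|; that is, residual deficiency minus one is supermultiplicative with respect to finite index normal subgroups. -/

import Mathlib

/-!
Given a finite presentation of `G` with `n` generators and relators `u j ^ m j`, and a normal
subgroup `N` of index `d`, Reidemeister rewriting yields a presentation of `N` whose residual
deficiency minus one is at least `d` times that of the given one. Its generators are the `d * n`
edges of the Cayley graph of `Q = G ⧸ N`. Words are lifted to paths by a homomorphism from the free
group to a wreath product with `Q`, and for any transversal `t` with `t 1 = 1` (no spanning tree is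
needed) the relators are the lifts of the `d - 1` nontrivial elements `t x`, together with one lift
of `u j ^ m j` for each orbit of `u j` on `Q` (`exists_presentation`). If `u j` has order `l` in `Q`
and order `k` modulo the finite residual, there are `d / l` orbits, and each lift is a power of an
element whose order modulo the finite residual of `N` is at least `k / l`. So the total cost is at
most `d - 1 + d * ∑ 1 / k` (`exists_mem_rdefSet_of_normal`). The bases of these relators need not be
roots, but replacing an element by its root only increases the residual deficiency
(`exists_mem_rdefSet`).

As suprema are taken in `ℝ`, it must also be shown that the residual deficiencies of presentations
of the subgroup are bounded above (`bddAbove_rdefSet`). For this one rewrites to a finite index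
subgroup in which every `u j` attains its order `k`: the resulting group has a presentation with
`d * n` generators and at most `d - 1 + d * ∑ 1 / k` relators, but is generated by `d * a` elements,
where `a` elements generate the original group. Counting homomorphisms to `ℚ` bounds the first
number by the sum of the other two.
-/

open scoped Classical ENNReal

namespace ResDef

variable {G : Type*} [Group G]

/-- The order of the image of `x` in `G ⧸ H`: the least positive `j` with `x ^ j ∈ H`,
or `0` if there is no such `j`. -/
noncomputable def orderIn (H : Subgroup G) (x : G) : ℕ :=
  sInf {j : ℕ | 0 < j ∧ x ^ j ∈ H}

/-- The finite residual: the intersection of all finite index subgroups. -/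
def finiteResidual (G : Type*) [Group G] : Subgroup G :=
  ⨅ (H : Subgroup G) (_ : H.index ≠ 0), H

/-- An element of a free group is not a proper power. -/
def NotProperPower {α : Type*} (u : FreeGroup α) : Prop :=
  ∀ (v : FreeGroup α) (k : ℕ), u = v ^ k → k = 1

/-- `G` admits a finite presentation. -/
def FinitelyPresentedGroup (G : Type*) [Group G] : Prop :=
  ∃ (n : ℕ) (R : Finset (FreeGroup (Fin n))) (φ : FreeGroup (Fin n) →* G),
    Function.Surjective φ ∧ φ.ker = Subgroup.normalClosure (R : Set (FreeGroup (Fin n)))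

/-- The deficiency of a finitely presented group. -/
noncomputable def deficiency (G : Type*) [Group G] : ℝ :=
  sSup {x : ℝ | ∃ (n : ℕ) (R : Finset (FreeGroup (Fin n))) (φ : FreeGroup (Fin n) →* G),
    Function.Surjective φ ∧ φ.ker = Subgroup.normalClosure (R : Set (FreeGroup (Fin n))) ∧
    x = (n : ℝ) - (R.card : ℝ)}

/-- The residual deficiency of a finitely presented group. -/
noncomputable def rdef (G : Type*) [Group G] : ℝ :=
  sSup {x : ℝ | ∃ (n s : ℕ) (u : Fin s → FreeGroup (Fin n)) (m : Fin s → ℕ)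
    (φ : FreeGroup (Fin n) →* G),
    (∀ i, 1 ≤ m i) ∧ (∀ i, NotProperPower (u i)) ∧ Function.Surjective φ ∧
    φ.ker = Subgroup.normalClosure (Set.range fun i => u i ^ m i) ∧
    x = (n : ℝ) - ∑ i, ((orderIn (finiteResidual G) (φ (u i)) : ℝ))⁻¹}

/-- The deficiency gradient. -/
noncomputable def DG (G : Type*) [Group G] : ℝ :=
  sSup {x : ℝ | ∃ H : Subgroup G, H.index ≠ 0 ∧
    x = (deficiency H - 1) / (H.index : ℝ)}

/-- `ν_p(r)`: the largest `k` such that `r = s ^ (p ^ k)` for some `s`. -/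
noncomputable def nuP (p : ℕ) {α : Type*} (r : FreeGroup α) : ℕ :=
  sSup {k : ℕ | ∃ s : FreeGroup α, r = s ^ (p ^ k)}

/-- The `p`-deficiency of a group. -/
noncomputable def defP (p : ℕ) (G : Type*) [Group G] : ℝ :=
  sSup {x : ℝ | ∃ (n : ℕ) (R : Set (FreeGroup (Fin n))) (φ : FreeGroup (Fin n) →* G),
    Function.Surjective φ ∧ φ.ker = Subgroup.normalClosure R ∧
    Summable (fun r : R => ((p : ℝ) ^ (nuP p r.1))⁻¹) ∧
    x = (n : ℝ) - ∑' r : R, ((p : ℝ) ^ (nuP p r.1))⁻¹}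

/-- The `p`-deficiency gradient. -/
noncomputable def DGp (p : ℕ) (G : Type*) [Group G] : ℝ :=
  sSup {x : ℝ | ∃ H : Subgroup G, H.Normal ∧ H.index ≠ 0 ∧
    x = (defP p H - 1) / (H.index : ℝ)}

/-- The rank (minimal number of generators) of a group. -/
noncomputable def grpRank (G : Type*) [Group G] : ℕ :=
  sInf {n : ℕ | ∃ S : Finset G, S.card = n ∧ Subgroup.closure (S : Set G) = ⊤}

/-- The rank gradient. -/
noncomputable def RG (G : Type*) [Group G] : ℝ :=
  sInf {x : ℝ | ∃ H : Subgroup G, H.index ≠ 0 ∧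
    x = ((grpRank H : ℝ) - 1) / (H.index : ℝ)}

/-- The `p`-rank: the largest `n` such that `G` surjects onto `(C_p)^n`. -/
noncomputable def pRank (p : ℕ) (G : Type*) [Group G] : ℕ :=
  sSup {n : ℕ | ∃ f : G →* (Fin n → Multiplicative (ZMod p)), Function.Surjective f}

/-- The `p`-rank gradient. -/
noncomputable def RGp (p : ℕ) (G : Type*) [Group G] : ℝ :=
  sInf {x : ℝ | ∃ H : Subgroup G, H.Normal ∧ H.index ≠ 0 ∧
    x = ((pRank p H : ℝ) - 1) / (H.index : ℝ)}

/-- `G` is large: some finite index subgroup surjects onto a free group of rank 2. -/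
def Large (G : Type*) [Group G] : Prop :=
  ∃ H : Subgroup G, H.index ≠ 0 ∧ ∃ f : H →* FreeGroup (Fin 2), Function.Surjective f

/-- The first Betti number: the largest `n` such that `G` surjects onto `ℤ^n`. -/
noncomputable def firstBetti (G : Type*) [Group G] : ℕ :=
  sSup {n : ℕ | ∃ f : G →* Multiplicative (Fin n → ℤ), Function.Surjective f}

/-- The order of the image of `x` in `G ⧸ H`, as an extended natural number. -/
noncomputable def orderInE (H : Subgroup G) (x : G) : ℕ∞ :=
  if orderIn H x = 0 then ⊤ else (orderIn H x : ℕ∞)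

/-- `ν(g; G, K)` from the paper, valued in `ℕ∞`. -/
noncomputable def nu (K : Subgroup G) (g : G) : ℕ∞ :=
  if g ∈ K then
    sSup ((fun a : G => orderInE K a) '' {a : G | ∃ n : ℤ, a ^ n = g})
  else
    sSup ((fun q : G × ℤ => (q.2.natAbs : ℕ∞)) '' {q : G × ℤ | q.2 ≠ 0 ∧ q.1 ^ q.2 = g})

/-- The relative size `ν(g;G,K)⁻¹` of an element (`0` if `ν` is infinite). -/
noncomputable def relsizeElem (K : Subgroup G) (g : G) : ℝ :=
  (((nu K g).toNat : ℝ))⁻¹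

/-- The relative size of a finite set. -/
noncomputable def relsizeFinset (K : Subgroup G) (S : Finset G) : ℝ :=
  ∑ g ∈ S, relsizeElem K g

/-- The relative size of a normal subgroup `M`, finitely generated as a normal subgroup. -/
noncomputable def relsizeSubgroup (K M : Subgroup G) : ℝ :=
  sInf {x : ℝ | ∃ S : Finset G, Subgroup.normalClosure (S : Set G) = M ∧
    x = relsizeFinset K S}

/-- `a` is a minimal root of `g` in `G` with respect to `K`. -/
def IsMinimalRoot (K : Subgroup G) (g a : G) : Prop :=
  (g ∈ K ∧ (∃ n : ℤ, a ^ n = g) ∧ ((orderIn K a : ℕ∞) = nu K g)) ∨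
  (g ∉ K ∧ ∃ m : ℕ, (m : ℕ∞) = nu K g ∧ a ^ m = g)


/-! ### Lifting words to the Cayley graph of a quotient -/

section Rewriting

variable {ι Q : Type*} [Group Q] (α : FreeGroup ι →* Q)

/-- The homomorphism from a free group to a wreath product which records how words lift to paths
in the Cayley graph of `Q`. The edges of this graph are the pairs `(i, y)`: the edge with label `i`
from the vertex `(α i)⁻¹ * y` to the vertex `y`. -/
def rewriteHom : FreeGroup ι →* (Q → FreeGroup (ι × Q)) ⋊[mulAutArrow] Q :=
  FreeGroup.lift fun i => ⟨fun y => FreeGroup.of (i, y), α (FreeGroup.of i)⟩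

/-- The edge word, read from end to start, of the path labelled `f` in the Cayley graph of `Q`
that ends at `y`. -/
def pathLift (f : FreeGroup ι) (y : Q) : FreeGroup (ι × Q) :=
  (rewriteHom α f).left y

theorem rewriteHom_right (f : FreeGroup ι) : (rewriteHom α f).right = α f := by
  have : (SemidirectProduct.rightHom).comp (rewriteHom α) = α := by
    ext i
    simp [rewriteHom]
  exact DFunLike.congr_fun this f

theorem pathLift_of (i : ι) (y : Q) : pathLift α (FreeGroup.of i) y = FreeGroup.of (i, y) := by
  simp [pathLift, rewriteHom]

theorem pathLift_one (y : Q) : pathLift α 1 y = 1 := by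
  simp [pathLift]

theorem pathLift_mul (f g : FreeGroup ι) (y : Q) :
    pathLift α (f * g) y = pathLift α f y * pathLift α g ((α f)⁻¹ * y) := by
  simp only [pathLift, map_mul, SemidirectProduct.mul_left, Pi.mul_apply, rewriteHom_right]
  rfl

theorem pathLift_inv (f : FreeGroup ι) (y : Q) :
    pathLift α f⁻¹ y = (pathLift α f (α f * y))⁻¹ := by
  have h := pathLift_mul α f⁻¹ f y
  rw [inv_mul_cancel, pathLift_one, map_inv, inv_inv] at h
  exact eq_inv_of_mul_eq_one_left h.symm

theorem pathLift_pow {f : FreeGroup ι} (hf : α f = 1) (k : ℕ) (y : Q) :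
    pathLift α (f ^ k) y = pathLift α f y ^ k := by
  induction k with
  | zero => simp [pathLift_one]
  | succ k ih => simp [pow_succ, pathLift_mul, ih, hf]

variable (t : Q → FreeGroup ι)

/-- Given a transversal `t`, the homomorphism sending an edge to the label of the loop at `1` that
reaches the edge along `t` and returns along `t`. -/
def edgeHom : FreeGroup (ι × Q) →* FreeGroup ι :=
  FreeGroup.lift fun p => (t p.2)⁻¹ * FreeGroup.of p.1 * t ((α (FreeGroup.of p.1))⁻¹ * p.2)

theorem edgeHom_of (i : ι) (y : Q) : edgeHom α t (FreeGroup.of (i, y)) =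
    (t y)⁻¹ * FreeGroup.of i * t ((α (FreeGroup.of i))⁻¹ * y) := by
  simp [edgeHom]

theorem edgeHom_pathLift (f : FreeGroup ι) (y : Q) :
    edgeHom α t (pathLift α f y) = (t y)⁻¹ * f * t ((α f)⁻¹ * y) := by
  induction f using FreeGroup.induction_on generalizing y with
  | C1 => simp [pathLift_one]
  | of i => rw [pathLift_of, edgeHom_of]
  | inv_of i ih =>
    rw [pathLift_inv, map_inv, ih]
    simp [mul_assoc]
  | mul f g hf hg =>
    rw [pathLift_mul, map_mul, hf, hg]
    simp [mul_assoc]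

variable {t}

theorem map_edgeHom (ht : ∀ x, α (t x) = x) (w : FreeGroup (ι × Q)) : α (edgeHom α t w) = 1 := by
  have : α.comp (edgeHom α t) = 1 := by
    ext p
    obtain ⟨i, y⟩ := p
    simp [edgeHom_of, ht]
  exact DFunLike.congr_fun this w

/-- Lifting at `1` is a section of `edgeHom` over the kernel of `α`. The opposite composite is the
identity modulo the lifts of the transversal, so these normally generate the kernel of
`edgeHom`. -/
theorem mk_pathLift_edgeHom (ht : ∀ x, α (t x) = x) (N : Subgroup (FreeGroup (ι × Q))) [N.Normal]
    (hN : ∀ x, pathLift α (t x) x ∈ N) (w : FreeGroup (ι × Q)) :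
    (QuotientGroup.mk (pathLift α (edgeHom α t w) 1) : FreeGroup (ι × Q) ⧸ N) =
      QuotientGroup.mk w := by
  let σ : FreeGroup (ι × Q) →* FreeGroup (ι × Q) :=
    { toFun := fun w => pathLift α (edgeHom α t w) 1
      map_one' := by simp [pathLift_one]
      map_mul' := fun a b => by
        simp [pathLift_mul, map_edgeHom α ht] }
  have : (QuotientGroup.mk' N).comp σ = QuotientGroup.mk' N := by
    ext p
    obtain ⟨i, y⟩ := p
    have h1 : ∀ x, (QuotientGroup.mk (pathLift α (t x) x) : FreeGroup (ι × Q) ⧸ N) = 1 :=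
      fun x => (QuotientGroup.eq_one_iff _).2 (hN x)
    simp [σ, edgeHom_of, pathLift_mul, pathLift_inv, ht, h1, pathLift_of]
  exact DFunLike.congr_fun this w

/-- Reidemeister's theorem for a kernel: to contain the kernel of `φ ∘ edgeHom`, a normal subgroup
only has to contain the lifts of the transversal and all lifts of the relators. -/
theorem ker_comp_edgeHom_le {G : Type*} [Group G] (φ : FreeGroup ι →* G)
    (ht : ∀ x, α (t x) = x) (hφ : φ.ker ≤ α.ker) (R : Set (FreeGroup ι))
    (hR : φ.ker = Subgroup.normalClosure R) (N : Subgroup (FreeGroup (ι × Q))) [hn : N.Normal]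
    (hN : ∀ x, pathLift α (t x) x ∈ N) (hNR : ∀ r ∈ R, ∀ y, pathLift α r y ∈ N) :
    (φ.comp (edgeHom α t)).ker ≤ N := by
  let M : Subgroup (FreeGroup ι) :=
    { carrier := {f | α f = 1 ∧ ∀ y, pathLift α f y ∈ N}
      one_mem' := by simp [pathLift_one, N.one_mem]
      mul_mem' := by
        rintro a b ⟨ha, ha'⟩ ⟨hb, hb'⟩
        refine ⟨by simp [ha, hb], fun y => ?_⟩
        rw [pathLift_mul]
        exact N.mul_mem (ha' _) (hb' _)
      inv_mem' := by
        rintro a ⟨ha, ha'⟩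
        refine ⟨by simp [ha], fun y => ?_⟩
        rw [pathLift_inv]
        exact N.inv_mem (ha' _) }
  have hM : M.Normal := ⟨by
    rintro a ⟨ha, ha'⟩ g
    refine ⟨by simp [ha], fun y => ?_⟩
    have := hn.conj_mem _ (ha' ((α g)⁻¹ * y)) (pathLift α g y)
    simpa [pathLift_mul, pathLift_inv, ha, mul_assoc] using this⟩
  have hRM : Subgroup.normalClosure R ≤ M := Subgroup.normalClosure_le_normal fun r hr =>
    ⟨hφ (hR ▸ Subgroup.subset_normalClosure hr), hNR r hr⟩
  intro w hw
  have hw' : edgeHom α t w ∈ φ.ker := hw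
  rw [hR] at hw'
  rw [← QuotientGroup.eq_one_iff, ← mk_pathLift_edgeHom α ht N hN, QuotientGroup.eq_one_iff]
  exact (hRM hw').2 1

/-- Lifts of a relator `u ^ m` ending at vertices in one orbit of `α u` are conjugate, hence lie
in the same normal subgroups. -/
theorem pathLift_pow_mem_iff (u : FreeGroup ι) (m : ℕ) (hu : α (u ^ m) = 1)
    (N : Subgroup (FreeGroup (ι × Q))) [hn : N.Normal] {g : Q}
    (hg : g ∈ Subgroup.zpowers (α u)) (y : Q) :
    pathLift α (u ^ m) (g * y) ∈ N ↔ pathLift α (u ^ m) y ∈ N := by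
  have key : ∀ z, pathLift α (u ^ m) (α u * z) ∈ N ↔ pathLift α (u ^ m) z ∈ N := fun z => by
    have h : pathLift α (u ^ m * u) (α u * z) = pathLift α (u * u ^ m) (α u * z) := by
      rw [← pow_succ, ← pow_succ']
    rw [pathLift_mul, pathLift_mul, hu, inv_one, one_mul, inv_mul_cancel_left] at h
    rw [eq_mul_inv_of_mul_eq h]
    exact (hn.mem_comm_iff.trans (by simp))
  let S : Subgroup Q :=
    { carrier := {g | ∀ z, pathLift α (u ^ m) (g * z) ∈ N ↔ pathLift α (u ^ m) z ∈ N}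
      one_mem' := by simp
      mul_mem' := fun {a b} ha hb z => by rw [mul_assoc, ha, hb]
      inv_mem' := fun {a} ha z => by rw [← ha, mul_inv_cancel_left] }
  have : Subgroup.zpowers (α u) ≤ S := by
    rw [Subgroup.zpowers_le]
    exact key
  exact this hg y

end Rewriting

/-! ### Presentations of normal subgroups -/

section Presentation

/-- Reidemeister's presentation of a normal subgroup `N` with quotient `Q`: the generators are the
edges of the Cayley graph of `Q`, and the relators are the lifts `τ x` of a transversal together
with one lift of each relator `u j ^ m j` for each orbit of `u j` on `Q`. The latter is a power of
the lift of `u j ^ l`, where `l` is the order of `u j` in `Q`. -/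
theorem exists_presentation {G : Type*} [Group G] {ι κ : Type*} (φ : FreeGroup ι →* G)
    (hφ : Function.Surjective φ) (u : κ → FreeGroup ι) (m : κ → ℕ)
    (hker : φ.ker = Subgroup.normalClosure (Set.range fun j => u j ^ m j))
    (N : Subgroup G) [N.Normal] :
    ∃ (π : FreeGroup (ι × G ⧸ N) →* N) (τ : {x : G ⧸ N // x ≠ 1} → FreeGroup (ι × G ⧸ N))
      (v : (Σ j : κ, Quotient (QuotientGroup.rightRel
        (Subgroup.zpowers (φ (u j) : G ⧸ N)))) → FreeGroup (ι × G ⧸ N))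
      (g : (Σ j : κ, Quotient (QuotientGroup.rightRel
        (Subgroup.zpowers (φ (u j) : G ⧸ N)))) → G),
      Function.Surjective π ∧
      π.ker = Subgroup.normalClosure (Set.range
        (Sum.elim τ fun p => v p ^ (m p.1 / orderOf (φ (u p.1) : G ⧸ N)))) ∧
      ∀ p, ((π (v p) : N) : G) =
        (g p)⁻¹ * φ (u p.1) ^ orderOf (φ (u p.1) : G ⧸ N) * g p := by
  let α : FreeGroup ι →* G ⧸ N := (QuotientGroup.mk' N).comp φ
  have hα : ∀ f, α f = (φ f : G ⧸ N) := fun f => rfl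
  have hαs : Function.Surjective α := (QuotientGroup.mk'_surjective N).comp hφ
  obtain ⟨t, ht, ht1⟩ : ∃ t : G ⧸ N → FreeGroup ι, (∀ x, α (t x) = x) ∧ t 1 = 1 := by
    refine ⟨Function.update (Function.surjInv hαs) 1 1, fun x => ?_, by simp⟩
    by_cases hx : x = 1
    · subst hx; simp
    · simp [hx, Function.surjInv_eq hαs]
  have hφα : φ.ker ≤ α.ker := fun f hf => by
    rw [MonoidHom.mem_ker] at hf ⊢
    rw [hα, hf, QuotientGroup.mk_one]
  have hmem : ∀ w, (φ.comp (edgeHom α t)) w ∈ N := fun w =>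
    (QuotientGroup.eq_one_iff _).1 (map_edgeHom α ht w)
  have hrel : ∀ j, φ (u j ^ m j) = 1 := fun j => by
    rw [← MonoidHom.mem_ker, hker]
    exact Subgroup.subset_normalClosure ⟨j, rfl⟩
  have hrelα : ∀ j, α (u j ^ m j) = 1 := fun j => hφα (hrel j)
  have hl : ∀ j, α (u j ^ orderOf (φ (u j) : G ⧸ N)) = 1 := fun j => by
    rw [map_pow, hα, pow_orderOf_eq_one]
  have hv : ∀ j y, pathLift α (u j ^ orderOf (φ (u j) : G ⧸ N)) y ^
      (m j / orderOf (φ (u j) : G ⧸ N)) = pathLift α (u j ^ m j) y := fun j y => by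
    rw [← pathLift_pow α (hl j), ← pow_mul, Nat.mul_div_cancel']
    rw [orderOf_dvd_iff_pow_eq_one, ← hα, ← map_pow, hrelα]
  refine ⟨(φ.comp (edgeHom α t)).codRestrict N hmem, fun x => pathLift α (t x) x,
    fun p => pathLift α (u p.1 ^ orderOf (φ (u p.1) : G ⧸ N)) p.2.out,
    fun p => φ (t p.2.out), ?_, ?_, ?_⟩
  · rintro ⟨n, hn⟩
    obtain ⟨f, rfl⟩ := hφ n
    have hf : α f = 1 := (QuotientGroup.eq_one_iff _).2 hn
    refine ⟨pathLift α f 1, Subtype.ext ?_⟩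
    simp [edgeHom_pathLift, hf, ht1]
  · rw [MonoidHom.ker_codRestrict]
    apply le_antisymm
    · refine ker_comp_edgeHom_le α φ ht hφα _ hker _ (fun x => ?_) ?_
      · by_cases hx : x = 1
        · subst hx
          rw [ht1, pathLift_one]
          exact one_mem _
        · exact Subgroup.subset_normalClosure ⟨Sum.inl ⟨x, hx⟩, rfl⟩
      · rintro _ ⟨j, rfl⟩ y
        let q : Quotient (QuotientGroup.rightRel (Subgroup.zpowers (φ (u j) : G ⧸ N))) :=
          Quotient.mk _ y
        have hq : y * q.out⁻¹ ∈ Subgroup.zpowers (α (u j)) :=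
          QuotientGroup.rightRel_apply.1 (Quotient.exact (Quotient.out_eq q))
        have h := pathLift_pow_mem_iff α (u j) (m j) (hrelα j) (Subgroup.normalClosure (Set.range
          (Sum.elim (fun x : {x : G ⧸ N // x ≠ 1} => pathLift α (t x) x)
            fun p : (Σ j : κ, Quotient (QuotientGroup.rightRel
              (Subgroup.zpowers (φ (u j) : G ⧸ N)))) =>
              pathLift α (u p.1 ^ orderOf (φ (u p.1) : G ⧸ N)) p.2.out ^
                (m p.1 / orderOf (φ (u p.1) : G ⧸ N))))) hq q.out
        rw [inv_mul_cancel_right] at h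
        refine h.2 (Subgroup.subset_normalClosure ⟨Sum.inr ⟨j, q⟩, ?_⟩)
        exact hv j _
    · refine Subgroup.normalClosure_le_normal ?_
      rintro _ ⟨x | p, rfl⟩
      · simp [edgeHom_pathLift, ht, ht1]
      · simp only [Sum.elim_inr, SetLike.mem_coe, hv]
        rw [MonoidHom.mem_ker, MonoidHom.comp_apply, edgeHom_pathLift, hrelα]
        simp [hrel]
  · intro p
    simp only [MonoidHom.codRestrict_apply, MonoidHom.comp_apply, edgeHom_pathLift, hl]
    simp

end Presentation

/-! ### Deficiency and the number of generators -/

section Bound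

/-- If `n` elements normally generate a free group of rank `k`, then `k ≤ n`: otherwise they lie in
the kernel of a nontrivial homomorphism to `ℚ`. -/
theorem card_le_of_normalClosure_eq_top {A B : Type*} [Fintype A] [Fintype B]
    (ρ : B → FreeGroup A) (h : Subgroup.normalClosure (Set.range ρ) = ⊤) :
    Fintype.card A ≤ Fintype.card B := by
  let D : FreeGroup A →* Multiplicative ((A → ℚ) →ₗ[ℚ] ℚ) :=
    FreeGroup.lift fun a => Multiplicative.ofAdd (LinearMap.proj a)
  let T : (A → ℚ) →ₗ[ℚ] (B → ℚ) := LinearMap.pi fun b => (D (ρ b)).toAdd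
  have hT : Function.Injective T := by
    rw [← LinearMap.ker_eq_bot, LinearMap.ker_eq_bot']
    intro f hf
    let E : FreeGroup A →* Multiplicative ℚ :=
      (AddMonoidHom.toMultiplicative (LinearMap.applyₗ f).toAddMonoidHom).comp D
    have hE : ⊤ ≤ E.ker := by
      rw [← h]
      refine Subgroup.normalClosure_le_normal ?_
      rintro _ ⟨b, rfl⟩
      exact congrFun hf b
    funext a
    have : E (FreeGroup.of a) = 1 := hE (Subgroup.mem_top _)
    simpa [E, D] using congrArg Multiplicative.toAdd this
  simpa using LinearMap.finrank_le_finrank_of_injective hT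

/-- A group presented with `A` generators and `B` relators, which is also generated by `C` elements,
satisfies `|A| - |B| ≤ |C|`. -/
theorem card_le_add_of_presentation {N : Type*} [Group N] {A B C : Type*} [Fintype A] [Fintype B]
    [Fintype C] (π : FreeGroup A →* N) (ρ : B → FreeGroup A)
    (hker : π.ker = Subgroup.normalClosure (Set.range ρ)) (hπ : Function.Surjective π)
    (χ : FreeGroup C →* N) (hχ : Function.Surjective χ) :
    Fintype.card A ≤ Fintype.card B + Fintype.card C := by
  choose w hw using fun c => hπ (χ (FreeGroup.of c))
  rw [← Fintype.card_sum]
  refine card_le_of_normalClosure_eq_top (Sum.elim ρ w) ?_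
  set K := Subgroup.normalClosure (Set.range (Sum.elim ρ w)) with hK
  have h1 : π.ker ≤ K := by
    rw [hker]
    exact Subgroup.normalClosure_mono (by simp [Set.Sum.elim_range])
  have h2 : ∀ x, χ x ∈ K.map π := fun x => by
    have : ⊤ ≤ (K.map π).comap χ := by
      rw [← FreeGroup.closure_range_of, Subgroup.closure_le]
      rintro _ ⟨c, rfl⟩
      exact ⟨w c, Subgroup.subset_normalClosure ⟨Sum.inr c, rfl⟩, hw c⟩
    exact this (Subgroup.mem_top x)
  rw [eq_top_iff]
  intro x _
  obtain ⟨z, hz⟩ := hχ (π x)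
  obtain ⟨k, hk, hkx⟩ := h2 z
  have : x * k⁻¹ ∈ K := h1 (by rw [MonoidHom.mem_ker, map_mul, map_inv, hkx, hz, mul_inv_cancel])
  simpa using K.mul_mem this hk

end Bound

/-! ### Roots in free groups -/

section Roots

/-- The cyclically reduced core of `v` is nonempty, and is repeated `k` times in the reduced word
of `v ^ k`. -/
theorem le_norm_pow {α : Type*} {v : FreeGroup α} (hv : v ≠ 1) (k : ℕ) :
    k ≤ (v ^ k).norm := by
  have hne : FreeGroup.reduceCyclically v.toWord ≠ [] := fun h => hv <| by
    have h1 := FreeGroup.reduceCyclically.conj_conjugator_reduceCyclically v.toWord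
    rw [h, List.append_nil] at h1
    rw [← FreeGroup.mk_toWord (x := v), ← h1, ← FreeGroup.mul_mk, ← FreeGroup.inv_mk,
      mul_inv_cancel]
  have hpos := List.length_pos_iff.2 hne
  rw [FreeGroup.norm, FreeGroup.toWord_pow,
    FreeGroup.reduceCyclically.reduce_flatten_replicate FreeGroup.isReduced_toWord]
  split_ifs with hk
  · simp [hk]
  · simp only [List.length_append, List.length_flatten, List.map_replicate, List.sum_replicate,
      smul_eq_mul]
    nlinarith

theorem exists_root {α : Type*} {u : FreeGroup α} (hu : u ≠ 1) :
    ∃ (v : FreeGroup α) (p : ℕ), 1 ≤ p ∧ u = v ^ p ∧ NotProperPower v := by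
  -- The exponents of roots of `u` are bounded by its length; take the largest one.
  let P : ℕ → Prop := fun k => ∃ v : FreeGroup α, u = v ^ k
  have hb : ∀ k, P k → k ≤ u.norm := by
    rintro k ⟨v, hv⟩
    have : v ≠ 1 := by
      rintro rfl
      exact hu (by simpa using hv)
    rw [hv]
    exact le_norm_pow this k
  have h1 : P 1 := ⟨u, by simp⟩
  have hpos : 1 ≤ Nat.findGreatest P u.norm := Nat.le_findGreatest (hb 1 h1) h1
  obtain ⟨v, hv⟩ : P (Nat.findGreatest P u.norm) := Nat.findGreatest_spec (hb 1 h1) h1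
  refine ⟨v, _, hpos, hv, fun w j hw => ?_⟩
  have hj : P (j * Nat.findGreatest P u.norm) := ⟨w, by rw [pow_mul, ← hw, ← hv]⟩
  have hle := Nat.le_findGreatest (hb _ hj) hj
  have hj0 : j ≠ 0 := by
    rintro rfl
    rw [pow_zero] at hw
    subst hw
    exact hu (by simpa using hv)
  have : j ≤ 1 := by nlinarith
  omega

end Roots

/-! ### Orders modulo the finite residual -/

section Order

variable {G : Type*} [Group G]

theorem orderIn_spec {K : Subgroup G} {x : G} {j : ℕ} (hj : 0 < j) (h : x ^ j ∈ K) :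
    0 < orderIn K x ∧ x ^ orderIn K x ∈ K :=
  Nat.sInf_mem (s := {j : ℕ | 0 < j ∧ x ^ j ∈ K}) ⟨j, hj, h⟩

theorem orderIn_le {K : Subgroup G} {x : G} {j : ℕ} (hj : 0 < j) (h : x ^ j ∈ K) :
    orderIn K x ≤ j :=
  Nat.sInf_le ⟨hj, h⟩

theorem orderIn_spec_of_ne_zero {K : Subgroup G} {x : G} (h : orderIn K x ≠ 0) :
    x ^ orderIn K x ∈ K := by
  have : {j : ℕ | 0 < j ∧ x ^ j ∈ K}.Nonempty := by
    by_contra hne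
    rw [Set.not_nonempty_iff_eq_empty] at hne
    exact h (by rw [orderIn, hne, Nat.sInf_empty])
  exact (Nat.sInf_mem this).2

theorem mem_finiteResidual {x : G} :
    x ∈ finiteResidual G ↔ ∀ L : Subgroup G, L.index ≠ 0 → x ∈ L := by
  simp [finiteResidual, Subgroup.mem_iInf]

theorem coe_mem_finiteResidual {N : Subgroup G} {x : N} (hx : x ∈ finiteResidual N) :
    (x : G) ∈ finiteResidual G := by
  rw [mem_finiteResidual] at hx ⊢
  intro L hL
  exact Subgroup.mem_subgroupOf.1 (hx (L.subgroupOf N) fun h =>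
    hL (Subgroup.index_eq_zero_of_relIndex_eq_zero h))

theorem finiteResidual_conj {x g : G} (hx : g⁻¹ * x * g ∈ finiteResidual G) :
    x ∈ finiteResidual G := by
  rw [mem_finiteResidual] at hx ⊢
  intro L hL
  have : L.FiniteIndex := ⟨hL⟩
  have hc : g⁻¹ * x * g ∈ L.normalCore := hx _ Subgroup.FiniteIndex.index_ne_zero
  refine Subgroup.normalCore_le L ?_
  simpa [mul_assoc] using (inferInstance : L.normalCore.Normal).conj_mem _ hc g

/-- Finite images of `G` detect the orders modulo the finite residual of finitely many elements. -/
theorem exists_normal_le_orderOf {κ : Type*} [Finite κ] (g : κ → G) :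
    ∃ N : Subgroup G, ∃ _ : N.Normal, N.FiniteIndex ∧
      ∀ i, orderIn (finiteResidual G) (g i) ≤ orderOf (g i : G ⧸ N) := by
  have h : ∀ p : Σ i, Fin (orderIn (finiteResidual G) (g i)), ∃ L : Subgroup G,
      L.index ≠ 0 ∧ (0 < (p.2 : ℕ) → g p.1 ^ (p.2 : ℕ) ∉ L) := by
    rintro ⟨i, j⟩
    by_cases hj : 0 < (j : ℕ)
    · have : g i ^ (j : ℕ) ∉ finiteResidual G := fun hm =>
        absurd (orderIn_le hj hm) (not_le.2 j.2)
      rw [mem_finiteResidual] at this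
      push Not at this
      obtain ⟨L, hL, hLj⟩ := this
      exact ⟨L, hL, fun _ => hLj⟩
    · exact ⟨⊤, by simp, fun h => absurd h hj⟩
  choose L hL hLg using h
  have hfi : (⨅ p, L p).FiniteIndex := Subgroup.finiteIndex_iInf fun p => ⟨hL p⟩
  refine ⟨(⨅ p, L p).normalCore, inferInstance, inferInstance, fun i => ?_⟩
  by_contra hlt
  push Not at hlt
  have hpos : 0 < orderOf (g i : G ⧸ (⨅ p, L p).normalCore) := orderOf_pos _
  refine hLg ⟨i, ⟨_, hlt⟩⟩ hpos ?_
  refine (Subgroup.mem_iInf.1 (Subgroup.normalCore_le (⨅ p, L p) ?_)) _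
  rw [← QuotientGroup.eq_one_iff, QuotientGroup.mk_pow, pow_orderOf_eq_one]

/-- The order modulo the finite residual drops at most by the factor `l` on passing from `x` to a
conjugate of `x ^ l` in a subgroup. The assumption `x ^ j = 1` keeps the denominator on
the right from being the junk order `0`. -/
theorem inv_orderIn_le {N : Subgroup G} {x g : G} {y : N} {l j : ℕ} (hl : 0 < l) (hj : 0 < j)
    (hx : x ^ j = 1) (hy : (y : G) = g⁻¹ * x ^ l * g) :
    ((orderIn (finiteResidual N) y : ℝ))⁻¹ ≤ l / (orderIn (finiteResidual G) x : ℝ) := by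
  have hk : 0 < orderIn (finiteResidual G) x :=
    (orderIn_spec hj (by rw [hx]; exact one_mem _)).1
  rcases Nat.eq_zero_or_pos (orderIn (finiteResidual N) y) with h0 | hp
  · rw [h0]
    simp only [Nat.cast_zero, inv_zero]
    positivity
  · have h1 := coe_mem_finiteResidual (orderIn_spec_of_ne_zero hp.ne')
    have hconj : ((y ^ orderIn (finiteResidual N) y : N) : G) =
        g⁻¹ * x ^ (l * orderIn (finiteResidual N) y) * g := by
      rw [SubmonoidClass.coe_pow, hy, pow_mul]
      simpa using conj_pow (a := g⁻¹) (b := x ^ l) (i := orderIn (finiteResidual N) y)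
    rw [hconj] at h1
    have h2 := orderIn_le (Nat.mul_pos hl hp) (finiteResidual_conj h1)
    have h3 : (orderIn (finiteResidual G) x : ℝ) ≤ l * orderIn (finiteResidual N) y := by
      exact_mod_cast h2
    rw [inv_eq_one_div, div_le_div_iff₀ (by exact_mod_cast hp) (by exact_mod_cast hk), one_mul]
    exact h3

end Order

/-! ### Residual deficiency of finite index subgroups -/

section Rdef

variable {G : Type*} [Group G]

/-- The residual deficiencies of the finite presentations of `G`. -/
def rdefSet (G : Type*) [Group G] : Set ℝ :=
  {x : ℝ | ∃ (n s : ℕ) (u : Fin s → FreeGroup (Fin n)) (m : Fin s → ℕ)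
    (φ : FreeGroup (Fin n) →* G),
    (∀ i, 1 ≤ m i) ∧ (∀ i, NotProperPower (u i)) ∧ Function.Surjective φ ∧
    φ.ker = Subgroup.normalClosure (Set.range fun i => u i ^ m i) ∧
    x = (n : ℝ) - ∑ i, ((orderIn (finiteResidual G) (φ (u i)) : ℝ))⁻¹}

/-- For relators `w i ^ m i` in which `w i` may be trivial or a proper power, deleting the trivial
ones and replacing the others by roots can only increase the residual deficiency. -/
theorem exists_mem_rdefSet {ι κ : Type*} [Fintype ι] [Fintype κ] (φ : FreeGroup ι →* G)
    (hφ : Function.Surjective φ) (w : κ → FreeGroup ι) (m : κ → ℕ) (hm : ∀ i, 1 ≤ m i)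
    (hker : φ.ker = Subgroup.normalClosure (Set.range fun i => w i ^ m i)) :
    ∃ x ∈ rdefSet G, (Fintype.card ι : ℝ) -
      ∑ i, ((orderIn (finiteResidual G) (φ (w i)) : ℝ))⁻¹ ≤ x := by
  let e := FreeGroup.freeGroupCongr (Fintype.equivFin ι)
  let φ' : FreeGroup (Fin (Fintype.card ι)) →* G := φ.comp e.symm.toMonoidHom
  have hφe : ∀ x, φ' (e x) = φ x := fun x => by simp [φ']
  let S := {i : κ // w i ≠ 1}
  have hroot : ∀ i : S, ∃ (v : FreeGroup (Fin (Fintype.card ι))) (p : ℕ),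
      1 ≤ p ∧ e (w i) = v ^ p ∧ NotProperPower v := fun i =>
    exists_root (by simpa using i.2)
  choose v p hp hv hvn using hroot
  let f : Fin (Fintype.card S) ≃ S := (Fintype.equivFin S).symm
  refine ⟨_, ⟨Fintype.card ι, Fintype.card S, fun i => v (f i), fun i => p (f i) * m (f i), φ',
    fun i => Nat.mul_pos (hp _) (hm _), fun i => hvn _, ?_, ?_, rfl⟩, ?_⟩
  · exact hφ.comp e.symm.surjective
  · have h1 : φ'.ker = φ.ker.map e.toMonoidHom := by
      ext x
      rw [Subgroup.mem_map_equiv]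
      rfl
    rw [h1, hker, Subgroup.map_normalClosure _ e.toMonoidHom e.surjective]
    apply le_antisymm
    · refine Subgroup.normalClosure_le_normal ?_
      rintro _ ⟨_, ⟨i, rfl⟩, rfl⟩
      by_cases hi : w i = 1
      · simp [hi]
      · refine Subgroup.subset_normalClosure ⟨f.symm ⟨i, hi⟩, ?_⟩
        simp only [Equiv.apply_symm_apply, pow_mul, ← hv]
        simp
    · refine Subgroup.normalClosure_mono ?_
      rintro _ ⟨i, rfl⟩
      refine ⟨_, ⟨(f i : κ), rfl⟩, ?_⟩
      simp only [pow_mul, ← hv]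
      simp
  · refine sub_le_sub_left ?_ _
    rw [Equiv.sum_comp f fun i => ((orderIn (finiteResidual G) (φ' (v i)) : ℝ))⁻¹,
      ← Fintype.sum_subtype_add_sum_subtype (fun i => w i ≠ 1)
        fun i => ((orderIn (finiteResidual G) (φ (w i)) : ℝ))⁻¹]
    refine le_add_of_le_of_nonneg (Finset.sum_le_sum fun i _ => ?_)
      (Finset.sum_nonneg fun i _ => by positivity)
    have hw : φ (w i) = φ' (v i) ^ p i := by rw [← hφe, hv, map_pow]
    have h1 : φ (w i) ^ m i = 1 := by
      rw [← map_pow, ← MonoidHom.mem_ker, hker]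
      exact Subgroup.subset_normalClosure ⟨i, rfl⟩
    obtain ⟨hpos, -⟩ := orderIn_spec (K := finiteResidual G) (hm i) (by rw [h1]; exact one_mem _)
    obtain ⟨hpos', hmem⟩ := orderIn_spec (K := finiteResidual G) (x := φ' (v i))
      (Nat.mul_pos (hp i) (hm i)) (by rw [pow_mul, ← hw, h1]; exact one_mem _)
    refine inv_anti₀ (by exact_mod_cast hpos) ?_
    refine Nat.cast_le.2 (orderIn_le hpos' ?_)
    rw [hw, ← pow_mul, mul_comm, pow_mul]
    exact pow_mem hmem _

/-- Left translation by `q` has orbits of length `orderOf q`; they are the right cosets of the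
powers of `q`. -/
theorem card_orbits {Q : Type*} [Group Q] [Finite Q] (q : Q) :
    (Nat.card (Quotient (QuotientGroup.rightRel (Subgroup.zpowers q))) : ℝ) =
      Nat.card Q / orderOf q := by
  rw [Nat.card_congr (QuotientGroup.quotientRightRelEquivQuotientLeftRel _),
    ← Subgroup.card_mul_index (Subgroup.zpowers q), Nat.card_zpowers]
  have : (orderOf q : ℝ) ≠ 0 := by exact_mod_cast (orderOf_pos q).ne'
  rw [Nat.cast_mul, mul_div_cancel_left₀ _ this]
  rfl

theorem card_ne_one (Q : Type*) [Group Q] [Finite Q] [Fintype {x : Q // x ≠ 1}] :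
    (Fintype.card {x : Q // x ≠ 1} : ℝ) = Nat.card Q - 1 := by
  have : Fintype Q := Fintype.ofFinite Q
  rw [Fintype.card_subtype_compl, Fintype.card_subtype_eq, Nat.card_eq_fintype_card,
    Nat.cast_sub Fintype.card_pos, Nat.cast_one]

/-- The Reidemeister presentation of `N` obtained from a presentation of `G` with `n` generators
has `d * n` generators, where `d` is the index. The `d - 1` lifts of the transversal cost at most
`1` each, and a relator of `G` with orders `k` modulo the finite residual and `l` modulo `N` has
`d / l` lifts which cost at most `l / k` each. -/
theorem exists_mem_rdefSet_of_normal (N : Subgroup G) [N.Normal] [N.FiniteIndex] {x : ℝ}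
    (hx : x ∈ rdefSet G) : ∃ y ∈ rdefSet N, N.index * (x - 1) + 1 ≤ y := by
  obtain ⟨n, s, u, m, φ, hm, -, hφ, hker, rfl⟩ := hx
  obtain ⟨π, τ, v, g, hπ, hπker, hv⟩ := exists_presentation φ hφ u m hker N
  have : Fintype (G ⧸ N) := Fintype.ofFinite _
  have hu : ∀ j, φ (u j) ^ m j = 1 := fun j => by
    rw [← map_pow, ← MonoidHom.mem_ker, hker]
    exact Subgroup.subset_normalClosure ⟨j, rfl⟩
  have hl : ∀ j, 0 < orderOf (φ (u j) : G ⧸ N) := fun j => orderOf_pos _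
  have hdvd : ∀ j, orderOf (φ (u j) : G ⧸ N) ∣ m j := fun j => by
    rw [orderOf_dvd_iff_pow_eq_one, ← QuotientGroup.mk_pow, hu, QuotientGroup.mk_one]
  obtain ⟨y, hy, hxy⟩ := exists_mem_rdefSet π hπ (Sum.elim τ v)
    (Sum.elim (fun _ => 1) fun p => m p.1 / orderOf (φ (u p.1) : G ⧸ N))
    (by
      rintro (a | p)
      · exact le_rfl
      · exact Nat.div_pos (Nat.le_of_dvd (hm _) (hdvd _)) (hl _))
    (by
      rw [hπker]
      congr 2
      funext a
      rcases a with a | p <;> simp)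
  refine ⟨y, hy, le_trans ?_ hxy⟩
  have hd : Nat.card (G ⧸ N) = N.index := rfl
  rw [Fintype.sum_sum_type, Fintype.card_prod, Fintype.card_fin, ← Nat.card_eq_fintype_card, hd]
  have h1 : ∑ a, ((orderIn (finiteResidual N) (π (Sum.elim τ v (Sum.inl a))) : ℝ))⁻¹ ≤
      N.index - 1 := by
    rw [← hd, ← card_ne_one (G ⧸ N), ← nsmul_one]
    exact Finset.sum_le_card_nsmul _ _ _ fun a _ => Nat.cast_inv_le_one _
  have h2 : ∑ p, ((orderIn (finiteResidual N) (π (Sum.elim τ v (Sum.inr p))) : ℝ))⁻¹ ≤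
      N.index * ∑ j, ((orderIn (finiteResidual G) (φ (u j)) : ℝ))⁻¹ := by
    rw [Fintype.sum_sigma, Finset.mul_sum]
    refine Finset.sum_le_sum fun j _ => ?_
    refine (Finset.sum_le_sum fun a _ =>
      inv_orderIn_le (hl j) (hm j) (hu j) (hv ⟨j, a⟩)).trans (le_of_eq ?_)
    have : (orderOf (φ (u j) : G ⧸ N) : ℝ) ≠ 0 := by exact_mod_cast (hl j).ne'
    rw [Finset.sum_const, Finset.card_univ, ← Nat.card_eq_fintype_card, nsmul_eq_mul,
      card_orbits, hd, div_mul_div_cancel₀ this, div_eq_mul_inv]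
  push_cast
  linarith

/-- The residual deficiencies of presentations of a finitely generated group are bounded: in a
finite index subgroup detecting the orders of the relators, the Reidemeister presentation has a
deficiency which grows with the residual deficiency, but is at most the number of generators. -/
theorem bddAbove_rdefSet {A : Type*} [Fintype A] (χ : FreeGroup A →* G)
    (hχ : Function.Surjective χ) : BddAbove (rdefSet G) := by
  refine ⟨Fintype.card A + 1, ?_⟩
  rintro _ ⟨n, s, u, m, φ, hm, -, hφ, hker, rfl⟩
  obtain ⟨N, hN, hNf, hord⟩ := exists_normal_le_orderOf fun j => φ (u j)
  obtain ⟨π, τ, v, g, hπ, hπker, -⟩ := exists_presentation φ hφ u m hker N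
  obtain ⟨π', -, -, -, hπ', -⟩ := exists_presentation χ hχ (fun k : χ.ker => (k : FreeGroup A))
    (fun _ => 1) (by
      simpa only [pow_one, Subtype.range_coe_subtype, SetLike.setOfPred_mem_eq] using
        (Subgroup.normalClosure_eq_self χ.ker).symm) N
  have : Fintype (G ⧸ N) := Fintype.ofFinite _
  have hle := card_le_add_of_presentation π _ hπker hπ π' hπ'
  have hd : Nat.card (G ⧸ N) = N.index := rfl
  have hd0 : (0 : ℝ) < N.index := by
    exact_mod_cast Nat.pos_of_ne_zero Subgroup.FiniteIndex.index_ne_zero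
  have hle' : ((Fintype.card (Fin n × G ⧸ N) : ℕ) : ℝ) ≤ _ := Nat.cast_le.2 hle
  rw [Fintype.card_sum, Fintype.card_sigma, Fintype.card_prod, Fintype.card_prod, Fintype.card_fin,
    Nat.cast_add, Nat.cast_add, card_ne_one (G ⧸ N),
    ← Nat.card_eq_fintype_card (α := G ⧸ N), hd] at hle'
  push_cast at hle'
  have h2 : ∑ j, ((Fintype.card (Quotient (QuotientGroup.rightRel
      (Subgroup.zpowers (φ (u j) : G ⧸ N)))) : ℕ) : ℝ) ≤
      N.index * ∑ j, ((orderIn (finiteResidual G) (φ (u j)) : ℝ))⁻¹ := by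
    rw [Finset.mul_sum]
    refine Finset.sum_le_sum fun j _ => ?_
    have hu : φ (u j) ^ m j = 1 := by
      rw [← map_pow, ← MonoidHom.mem_ker, hker]
      exact Subgroup.subset_normalClosure ⟨j, rfl⟩
    obtain ⟨hpos, -⟩ := orderIn_spec (K := finiteResidual G) (hm j) (by rw [hu]; exact one_mem _)
    rw [← Nat.card_eq_fintype_card, card_orbits, hd, ← div_eq_mul_inv]
    exact div_le_div_of_nonneg_left hd0.le (by exact_mod_cast hpos) (by exact_mod_cast hord j)
  have h3 : (N.index : ℝ) * (n - ∑ j, ((orderIn (finiteResidual G) (φ (u j)) : ℝ))⁻¹) ≤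
      N.index * (Fintype.card A + 1) := by
    rw [mul_sub]
    linarith
  exact le_of_mul_le_mul_left h3 hd0

end Rdef

/-- residual deficiency minus one is supermultiplicative with respect to
finite index normal subgroups. -/
theorem statement14 {G : Type*} [Group G] (hG : FinitelyPresentedGroup G)
    (H : Subgroup G) (hHn : H.Normal) (hH : H.index ≠ 0) :
    rdef G - 1 ≤ (rdef H - 1) / (H.index : ℝ) := by
  have hHf : H.FiniteIndex := ⟨hH⟩
  obtain ⟨n, R, φ, hφ, hker⟩ := hG
  have hker' : φ.ker = Subgroup.normalClosure
      (Set.range fun r : R => (r : FreeGroup (Fin n)) ^ 1) := by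
    rw [hker]
    congr 1
    ext
    simp
  obtain ⟨x₀, hx₀, -⟩ := exists_mem_rdefSet φ hφ (fun r : R => (r : FreeGroup (Fin n)))
    (fun _ => 1) (fun _ => le_rfl) hker'
  obtain ⟨π, -, -, -, hπ, -⟩ := exists_presentation φ hφ (fun r : R => (r : FreeGroup (Fin n)))
    (fun _ => 1) hker' H
  have : Fintype (G ⧸ H) := Fintype.ofFinite _
  have hbdd : BddAbove (rdefSet H) := bddAbove_rdefSet π hπ
  have hd0 : (0 : ℝ) < H.index := by exact_mod_cast Nat.pos_of_ne_zero hH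
  rw [sub_le_iff_le_add]
  refine csSup_le (s := rdefSet G) ⟨x₀, hx₀⟩ fun x hx => ?_
  obtain ⟨y, hy, hxy⟩ := exists_mem_rdefSet_of_normal H hx
  have hyH : y ≤ rdef H := le_csSup hbdd hy
  rw [← sub_le_iff_le_add, le_div_iff₀ hd0]
  linarith

end ResDef
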